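/- Let f(n) = b_d·n^d + ... + b_0 be a polynomial with integer coefficients such that b_d > 0, gcd(b_d, ..., b_0) = 1, and f(n) is a positive integer for every positive integer n. Then there exists a constant C > 0 depending only on f such that for every real x ≥ 1 and every s ∈ ℕ, Σ_{n ≤ x} (f(n)/φ(f(n)))^s ≤ exp(s·log log(s+2) + C·s) · x, where the sum runs over positive integers n ≤ x. -/

import Mathlib

/-!
The ratio `m / φ(m)` is at most `exp (2 + ∑_{p ∣ m} 1/p)`. For `m = |f(n)|` with `n ≤ N`, the
prime divisors of `m` exceeding `Y = ⌊log₄ N⌋` contribute only `O(1)` to the sum, since there are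
`O(log N)` of them. The primes up to `Y` have product at most `4 ^ Y ≤ N`, so the Chinese remainder
theorem controls the joint distribution of the events `p ∣ f(n)`, `p ≤ Y`, up to a factor `2`.
Expanding `∏_{p ∣ f(n), p ≤ Y} exp (s/p)` over sets of primes therefore bounds its mean over
`n ≤ N` by `2 ∏_{p ≤ Y} (1 + (exp (s/p) - 1) ρ(p)/p)`, where `ρ(p) = O(1)` is the number of roots
of `f` modulo `p`. The primes `p > s` contribute `exp (O(s))` to this product; the primes `p ≤ s`
contribute at most `exp (s ∑_{p ≤ s} 1/p) = exp (s log log s + O(s))`, by Mertens' theorem.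
-/

open Finset Polynomial
open Nat (primesLE mem_primesLE prime_of_mem_primesLE)
open Real (exp log)

/-! ### Mertens' upper bound for the sum of reciprocals of primes -/

lemma sum_inv_sq_le_one {S : Finset ℕ} (hS : ∀ n ∈ S, 2 ≤ n) :
    ∑ n ∈ S, ((n : ℝ) ^ 2)⁻¹ ≤ 1 := by
  obtain ⟨N, hN⟩ := S.exists_nat_subset_range
  have hsub : S ⊆ Ioo 1 N := fun n hn ↦ mem_Ioo.mpr ⟨hS n hn, mem_range.mp (hN hn)⟩
  calc ∑ n ∈ S, ((n : ℝ) ^ 2)⁻¹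
      ≤ ∑ n ∈ Ioo 1 N, ((n : ℝ) ^ 2)⁻¹ :=
        sum_le_sum_of_subset_of_nonneg hsub fun _ _ _ ↦ by positivity
    _ ≤ 2 / ((1 : ℕ) + 1) := sum_Ioo_inv_sq_le 1 N
    _ = 1 := by norm_num

lemma sum_primesLE_div_mul_log_le (N : ℕ) :
    ∑ p ∈ primesLE N, (N / p : ℕ) * log p ≤ N * log N := by
  have hsub : primesLE N ⊆ Ioc 0 N :=
    (Nat.primesLE_eq_filter_Ioc_zero N).trans_subset (filter_subset _ _)
  calc ∑ p ∈ primesLE N, (N / p : ℕ) * log p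
      = ∑ p ∈ primesLE N, ArithmeticFunction.vonMangoldt p * (N / p : ℕ) :=
        sum_congr rfl fun p hp ↦ by
          rw [ArithmeticFunction.vonMangoldt_apply_prime (prime_of_mem_primesLE hp), mul_comm]
    _ ≤ ∑ n ∈ Ioc 0 N, ArithmeticFunction.vonMangoldt n * (N / n : ℕ) :=
        sum_le_sum_of_subset_of_nonneg hsub fun _ _ _ ↦
          mul_nonneg ArithmeticFunction.vonMangoldt_nonneg (Nat.cast_nonneg _)
    _ = ∑ n ∈ Ioc 0 N, log n := by
        rw [← ArithmeticFunction.sum_Ioc_mul_zeta_eq_sum, ArithmeticFunction.vonMangoldt_mul_zeta]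
        rfl
    _ ≤ ∑ _n ∈ Ioc 0 N, log N :=
        sum_le_sum fun n hn ↦ Real.log_le_log (mod_cast (mem_Ioc.mp hn).1)
          (mod_cast (mem_Ioc.mp hn).2)
    _ = N * log N := by simp

lemma sum_primesLE_log_div_le {N : ℕ} (hN : N ≠ 0) :
    ∑ p ∈ primesLE N, log p / p ≤ log N + log 4 := by
  have hN' : (0 : ℝ) < N := by positivity
  have htheta : ∑ p ∈ primesLE N, log p ≤ log 4 * N :=
    (Chebyshev.theta_eq_sum_primesLE_log N).symm.trans_le
      (Chebyshev.theta_le_log4_mul_x N.cast_nonneg)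
  refine le_of_mul_le_mul_left ?_ hN'
  calc N * ∑ p ∈ primesLE N, log p / p
      = ∑ p ∈ primesLE N, (N / p : ℝ) * log p := by
        rw [mul_sum]
        exact sum_congr rfl fun _ _ ↦ by ring
    _ ≤ ∑ p ∈ primesLE N, ((N / p : ℕ) + 1 : ℝ) * log p := by
        gcongr with p
        rw [← Nat.floor_div_eq_div (K := ℝ)]
        exact (Nat.lt_floor_add_one _).le
    _ = ∑ p ∈ primesLE N, (N / p : ℕ) * log p + ∑ p ∈ primesLE N, log p := by
        simp only [add_mul, one_mul, sum_add_distrib]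
    _ ≤ N * (log N + log 4) := by linarith [sum_primesLE_div_mul_log_le N]

lemma sum_primesLE_succ_of_eq_zero {M : Type*} [AddCommMonoid M] {g : ℕ → M} {N : ℕ}
    (hg : g (N + 1) = 0) : ∑ p ∈ primesLE (N + 1), g p = ∑ p ∈ primesLE N, g p := by
  rw [Nat.primesLE_succ]
  split_ifs
  · rw [sum_insert (Nat.notMem_primesLE N), hg, zero_add]
  · rfl

lemma div_le_div_add_log_sub_log {a u v : ℝ} (hu : 0 < u) (huv : u ≤ v) (ha : a ≤ u) :
    a / u ≤ a / v + (log v - log u) := by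
  have hv : 0 < v := hu.trans_le huv
  calc a / u = a / v + a * (u⁻¹ - v⁻¹) := by ring
    _ ≤ a / v + u * (u⁻¹ - v⁻¹) := by
        gcongr
        exact sub_nonneg.mpr (inv_anti₀ hu huv)
    _ = a / v + (1 - (v / u)⁻¹) := by field_simp
    _ ≤ a / v + log (v / u) := by
        gcongr
        exact Real.one_sub_inv_le_log_of_pos (div_pos hv hu)
    _ = a / v + (log v - log u) := by rw [Real.log_div hv.ne' hu.ne']

/- Partial summation, run as an induction: the right-hand side minus the left-hand side increases
with `N` and vanishes at `N = 2`. -/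
lemma sum_primesLE_inv_le_sum_log_div {N : ℕ} (hN : 2 ≤ N) :
    ∑ p ∈ primesLE N, (p : ℝ)⁻¹ ≤
      (∑ p ∈ primesLE N, log p / p - log 4) / log N + log (log N) + (2 - log (log 2)) := by
  induction N, hN using Nat.le_induction with
  | base =>
    have hprimes : primesLE 2 = {2} := by decide
    have hlog2 : log 2 ≠ 0 := (Real.log_pos one_lt_two).ne'
    have hlog4 : log 4 = 2 * log 2 := by
      rw [← Real.log_rpow two_pos]
      norm_num
    simp only [hprimes, sum_singleton, Nat.cast_ofNat, hlog4]
    field_simp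
    linarith
  | succ N hN ih =>
    have hlogN : 0 < log N := Real.log_pos (mod_cast hN)
    have hlog_le : log N ≤ log (N + 1 : ℕ) :=
      Real.log_le_log (by positivity) (mod_cast N.le_succ)
    have hnew := sum_primesLE_succ_of_eq_zero (N := N)
      (g := fun p ↦ (p : ℝ)⁻¹ - log p / p / log (N + 1 : ℕ)) (by
        rw [div_right_comm, div_self (hlogN.trans_le hlog_le).ne', one_div, sub_self])
    simp only [sum_sub_distrib, ← sum_div] at hnew
    have hstep := div_le_div_add_log_sub_log hlogN hlog_le
      (sub_le_iff_le_add.mpr (sum_primesLE_log_div_le (N := N) (by lia)))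
    simp only [sub_div] at ih hstep ⊢
    linarith

theorem exists_sum_primesLE_inv_le :
    ∃ C : ℝ, 0 < C ∧ ∀ s : ℕ, ∑ p ∈ primesLE s, (p : ℝ)⁻¹ ≤ log (log (s + 2)) + C := by
  have hloglog2 : log (log 2) < 0 :=
    Real.log_neg (Real.log_pos one_lt_two) (by linarith [Real.log_two_lt_d9])
  refine ⟨3 - log (log 2), by linarith, fun s ↦ ?_⟩
  have hlog : 0 < log (s + 2 : ℕ) := Real.log_pos (by norm_cast; lia)
  have hA : (∑ p ∈ primesLE (s + 2), log p / p - log 4) / log (s + 2 : ℕ) ≤ 1 :=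
    (div_le_one hlog).mpr (by linarith [sum_primesLE_log_div_le (N := s + 2) (by lia)])
  have hmono : ∑ p ∈ primesLE s, (p : ℝ)⁻¹ ≤ ∑ p ∈ primesLE (s + 2), (p : ℝ)⁻¹ :=
    sum_le_sum_of_subset_of_nonneg (Nat.primesLE_mono (by lia)) fun _ _ _ ↦ by positivity
  have hAbel := sum_primesLE_inv_le_sum_log_div (N := s + 2) (by lia)
  push_cast at hA hAbel
  linarith

/-! ### The ratio `m / φ(m)` -/

lemma natCast_div_totient_eq_prod {m : ℕ} (hm : m ≠ 0) :
    (m : ℝ) / m.totient = ∏ p ∈ m.primeFactors, (1 - (p : ℝ)⁻¹)⁻¹ := by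
  have htot : (m.totient : ℝ) = m * ∏ p ∈ m.primeFactors, (1 - (p : ℝ)⁻¹) := by
    simpa using congrArg (Rat.cast : ℚ → ℝ) (Nat.totient_eq_mul_prod_factors m)
  rw [htot, prod_inv_distrib, div_mul_cancel_left₀ (mod_cast hm)]

lemma inv_one_sub_inv_le_exp {x : ℝ} (hx : 2 ≤ x) :
    (1 - x⁻¹)⁻¹ ≤ exp (x⁻¹ + 2 * (x ^ 2)⁻¹) := by
  have hx1 : 0 < x - 1 := by linarith
  calc (1 - x⁻¹)⁻¹ = (x - 1)⁻¹ + 1 := by field_simp; ring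
    _ ≤ (x⁻¹ + 2 * (x ^ 2)⁻¹) + 1 := by
        gcongr
        rw [← sub_nonneg]
        have : x⁻¹ + 2 * (x ^ 2)⁻¹ - (x - 1)⁻¹ = (x - 2) / (x ^ 2 * (x - 1)) := by
          field_simp
          ring
        rw [this]
        exact div_nonneg (by linarith) (by positivity)
    _ ≤ exp (x⁻¹ + 2 * (x ^ 2)⁻¹) := Real.add_one_le_exp _

lemma natCast_div_totient_le_exp_sum_inv (m : ℕ) :
    (m : ℝ) / m.totient ≤ exp (2 + ∑ p ∈ m.primeFactors, (p : ℝ)⁻¹) := by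
  rcases eq_or_ne m 0 with rfl | hm
  · simp [Real.exp_nonneg]
  have htwo : ∀ p ∈ m.primeFactors, 2 ≤ p := fun p hp ↦ (Nat.prime_of_mem_primeFactors hp).two_le
  calc (m : ℝ) / m.totient
      = ∏ p ∈ m.primeFactors, (1 - (p : ℝ)⁻¹)⁻¹ := natCast_div_totient_eq_prod hm
    _ ≤ ∏ p ∈ m.primeFactors, exp ((p : ℝ)⁻¹ + 2 * ((p : ℝ) ^ 2)⁻¹) :=
        prod_le_prod (fun p _ ↦ inv_nonneg.mpr (sub_nonneg.mpr (Nat.cast_inv_le_one p)))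
          fun p hp ↦ inv_one_sub_inv_le_exp (mod_cast htwo p hp)
    _ = exp (∑ p ∈ m.primeFactors, (p : ℝ)⁻¹ + 2 * ∑ p ∈ m.primeFactors, ((p : ℝ) ^ 2)⁻¹) := by
        rw [← Real.exp_sum, sum_add_distrib, mul_sum]
    _ ≤ exp (2 + ∑ p ∈ m.primeFactors, (p : ℝ)⁻¹) :=
        Real.exp_le_exp.mpr (by linarith [sum_inv_sq_le_one htwo])

lemma card_primeFactors_mul_log_two_le (m : ℕ) : #m.primeFactors * log 2 ≤ log m := by
  rcases eq_or_ne m 0 with rfl | hm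
  · simp
  have hpow : 2 ^ #m.primeFactors ≤ m :=
    (pow_card_le_prod _ _ _ fun p hp ↦ (Nat.prime_of_mem_primeFactors hp).two_le).trans
      (Nat.le_of_dvd hm.pos (Nat.prod_primeFactors_dvd m))
  rw [← Real.log_pow]
  exact Real.log_le_log (by positivity) (mod_cast hpow)

lemma sum_primeFactors_inv_le (m Y : ℕ) :
    ∑ p ∈ m.primeFactors, (p : ℝ)⁻¹ ≤
      ∑ p ∈ primesLE Y with p ∣ m, (p : ℝ)⁻¹ + log m / ((Y + 1) * log 2) := by
  rw [← sum_filter_add_sum_filter_not m.primeFactors (· ≤ Y)]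
  refine add_le_add ?_ ?_
  · refine sum_le_sum_of_subset_of_nonneg (fun p hp ↦ ?_) fun _ _ _ ↦ by positivity
    rw [mem_filter, Nat.mem_primeFactors] at hp
    exact mem_filter.mpr ⟨mem_primesLE.mpr ⟨hp.2, hp.1.1⟩, hp.1.2.1⟩
  · calc ∑ p ∈ m.primeFactors with ¬ p ≤ Y, (p : ℝ)⁻¹
        ≤ ∑ p ∈ m.primeFactors with ¬ p ≤ Y, ((Y : ℝ) + 1)⁻¹ := by
          refine sum_le_sum fun p hp ↦ inv_anti₀ (by positivity) ?_
          exact_mod_cast not_le.mp (mem_filter.mp hp).2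
      _ ≤ #m.primeFactors * ((Y : ℝ) + 1)⁻¹ := by
          rw [sum_const, nsmul_eq_mul]
          gcongr
          exact filter_subset _ _
      _ = #m.primeFactors * log 2 / ((Y + 1) * log 2) := by field_simp
      _ ≤ log m / ((Y + 1) * log 2) := by
          gcongr
          exact card_primeFactors_mul_log_two_le m

/-! ### Values of integer polynomials -/

lemma exists_log_natAbs_eval_le (f : ℤ[X]) :
    ∃ B : ℝ, 0 ≤ B ∧ ∀ n : ℕ, 0 < n →
      log (f.eval (n : ℤ)).natAbs ≤ B + f.natDegree * log n := by
  set A : ℕ := ∑ i ∈ range (f.natDegree + 1), (f.coeff i).natAbs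
  refine ⟨log A, Real.log_natCast_nonneg A, fun n hn ↦ ?_⟩
  rcases eq_or_ne (f.eval (n : ℤ)) 0 with h0 | h0
  · simp only [h0, Int.natAbs_zero, Nat.cast_zero, Real.log_zero]
    positivity
  have hbound : (f.eval (n : ℤ)).natAbs ≤ A * n ^ f.natDegree := by
    rw [eval_eq_sum_range, sum_mul]
    refine (Int.natAbs_sum_le _ _).trans (sum_le_sum fun i hi ↦ ?_)
    rw [Int.natAbs_mul, Int.natAbs_pow, Int.natAbs_natCast]
    gcongr
    exact mem_range_succ_iff.mp hi
  have hA : A ≠ 0 := by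
    intro hA
    simp [hA, h0] at hbound
  rw [← Real.log_pow, ← Real.log_mul (mod_cast hA) (by positivity)]
  exact Real.log_le_log (mod_cast Int.natAbs_pos.mpr h0) (mod_cast hbound)

theorem exists_natAbs_eval_div_totient_le (f : ℤ[X]) :
    ∃ C : ℝ, 0 < C ∧ ∀ N : ℕ, ∀ n ∈ Icc 1 N,
      ((f.eval (n : ℤ)).natAbs : ℝ) / (f.eval (n : ℤ)).natAbs.totient ≤
        exp (C + ∑ p ∈ primesLE (Nat.log 4 N) with ((p : ℕ) : ℤ) ∣ f.eval (n : ℤ), (p : ℝ)⁻¹) := by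
  obtain ⟨B, hB, hlog⟩ := exists_log_natAbs_eval_le f
  refine ⟨2 + (B / log 2 + 2 * f.natDegree), by positivity, fun N n hn ↦ ?_⟩
  obtain ⟨hn1, hnN⟩ := mem_Icc.mp hn
  set m := (f.eval (n : ℤ)).natAbs
  set Y := Nat.log 4 N
  have hlogn : log n ≤ (Y + 1) * (2 * log 2) :=
    calc log n ≤ log ((2 ^ 2) ^ (Y + 1)) :=
          Real.log_le_log (by positivity)
            (mod_cast hnN.trans (Nat.lt_pow_succ_log_self (by norm_num) N).le)
      _ = (Y + 1) * (2 * log 2) := by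
          simp only [Real.log_pow]
          push_cast
          ring
  have hlarge : log m / ((Y + 1) * log 2) ≤ B / log 2 + 2 * f.natDegree :=
    calc log m / ((Y + 1) * log 2)
        ≤ (B * (Y + 1) + f.natDegree * ((Y + 1) * (2 * log 2))) / ((Y + 1) * log 2) := by
          gcongr
          refine (hlog n hn1).trans ?_
          gcongr
          exact le_mul_of_one_le_right hB (by linarith [Y.cast_nonneg (α := ℝ)])
      _ = B / log 2 + 2 * f.natDegree := by field_simp
  refine (natCast_div_totient_le_exp_sum_inv m).trans (Real.exp_le_exp.mpr ?_)
  simp only [Int.natCast_dvd]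
  linarith [sum_primeFactors_inv_le m Y]

/-! ### Roots modulo primes -/

/-- The number of roots modulo `q` of an integer polynomial, counted among the residues
`0, …, q - 1`; it is usually written `ρ(q)`. -/
def rootCountMod (f : ℤ[X]) (q : ℕ) : ℕ := #{r ∈ range q | (q : ℤ) ∣ f.eval ((r : ℕ) : ℤ)}

lemma rootCountMod_le_self (f : ℤ[X]) (q : ℕ) : rootCountMod f q ≤ q :=
  (card_filter_le _ _).trans_eq (card_range q)

lemma map_castRingHom_zmod_eq_zero_iff (f : ℤ[X]) (q : ℕ) :
    f.map (Int.castRingHom (ZMod q)) = 0 ↔ (q : ℤ) ∣ f.content := by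
  rw [dvd_content_iff_C_dvd, C_dvd_iff_dvd_coeff]
  simp [Polynomial.ext_iff, ZMod.intCast_zmod_eq_zero_iff_dvd]

lemma rootCountMod_le_natDegree {f : ℤ[X]} {p : ℕ} (hp : p.Prime) (hf : ¬ (p : ℤ) ∣ f.content) :
    rootCountMod f p ≤ f.natDegree := by
  have : Fact p.Prime := ⟨hp⟩
  set g := f.map (Int.castRingHom (ZMod p))
  have hg : g ≠ 0 := (map_castRingHom_zmod_eq_zero_iff f p).not.mpr hf
  calc rootCountMod f p ≤ #g.roots.toFinset := by
        refine card_le_card_of_injOn (fun r : ℕ ↦ (r : ZMod p)) (fun r hr ↦ ?_) ?_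
        · have hroot := (ZMod.intCast_zmod_eq_zero_iff_dvd _ p).mpr (mem_filter.mp hr).2
          simpa [g, hg] using (eval_intCast_map (Int.castRingHom (ZMod p)) f r).trans hroot
        · intro a ha b hb hab
          exact ((ZMod.natCast_eq_natCast_iff a b p).mp hab).eq_of_lt_of_lt
            (mem_range.mp (mem_filter.mp ha).1) (mem_range.mp (mem_filter.mp hb).1)
    _ ≤ g.natDegree := (Multiset.toFinset_card_le _).trans (card_roots' g)
    _ ≤ f.natDegree := natDegree_map_le

lemma exists_rootCountMod_le {f : ℤ[X]} (hf : f ≠ 0) :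
    ∃ d, ∀ p : ℕ, p.Prime → rootCountMod f p ≤ d := by
  refine ⟨max f.natDegree f.content.natAbs, fun p hp ↦ ?_⟩
  by_cases hdvd : (p : ℤ) ∣ f.content
  · have hcontent : 0 < f.content.natAbs := Int.natAbs_pos.mpr (mt content_eq_zero_iff.mp hf)
    exact (rootCountMod_le_self f p).trans
      (le_max_of_le_right (Nat.le_of_dvd hcontent (Int.natCast_dvd.mp hdvd)))
  · exact le_max_of_le_left (rootCountMod_le_natDegree hp hdvd)

/-! ### Moments over the small primes -/

/- By the Chinese remainder theorem, `n` is determined by `n / ∏ q` and its residues modulo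
the `q`. -/
lemma card_forall_dvd_eval_le (f : ℤ[X]) {T : Finset ℕ} (hpos : ∀ q ∈ T, 0 < q)
    (hT : (T : Set ℕ).Pairwise Nat.Coprime) (N : ℕ) :
    #{n ∈ Icc 1 N | ∀ q ∈ T, (q : ℤ) ∣ f.eval ((n : ℕ) : ℤ)} ≤
      (N / ∏ q ∈ T, q + 1) * ∏ q ∈ T, rootCountMod f q := by
  set D := ∏ q ∈ T, q
  simp only [rootCountMod]
  rw [← card_pi, ← card_range (N / D + 1), ← card_product]
  refine card_le_card_of_injOn (fun n ↦ (n / D, fun q _ ↦ n % q)) (fun n hn ↦ ?_) ?_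
  · simp only [coe_filter, Set.mem_ofPred_eq, mem_Icc] at hn
    obtain ⟨⟨-, hnN⟩, hdvd⟩ := hn
    simp only [mem_coe, mem_product, mem_range, mem_pi, mem_filter]
    refine ⟨Nat.lt_succ_of_le (Nat.div_le_div_right hnN), fun q hq ↦
      ⟨Nat.mod_lt _ (hpos q hq), ?_⟩⟩
    have hmod : (q : ℤ) ∣ n - (n % q : ℕ) := by
      push_cast
      exact Int.dvd_self_sub_emod
    exact (dvd_sub_right (hdvd q hq)).mp (hmod.trans (sub_dvd_eval_sub _ _ f))
  · intro a _ b _ hab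
    obtain ⟨hdiv, hres⟩ := Prod.mk.inj hab
    have hdvd : (D : ℤ) ∣ b - a := by
      rw [Nat.cast_prod]
      exact prod_dvd_of_coprime (fun p hp q hq hpq ↦ Nat.isCoprime_iff_coprime.mpr (hT hp hq hpq))
        fun q hq ↦ Nat.modEq_iff_dvd.mp (congrFun (congrFun hres q) hq)
    rw [← Nat.div_add_mod a D, ← Nat.div_add_mod b D, hdiv, Nat.modEq_iff_dvd.mpr hdvd]

lemma card_forall_dvd_eval_le_of_prod_le (f : ℤ[X]) {T : Finset ℕ} (hpos : ∀ q ∈ T, 0 < q)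
    (hT : (T : Set ℕ).Pairwise Nat.Coprime) {N : ℕ} (hN : ∏ q ∈ T, q ≤ N) :
    (#{n ∈ Icc 1 N | ∀ q ∈ T, (q : ℤ) ∣ f.eval ((n : ℕ) : ℤ)} : ℝ) ≤
      2 * N * ∏ q ∈ T, (rootCountMod f q / q : ℝ) := by
  have hcard := card_forall_dvd_eval_le f hpos hT N
  rw [prod_div_distrib, ← Nat.cast_prod, ← Nat.cast_prod]
  set D := ∏ q ∈ T, q
  have hD : 0 < D := prod_pos hpos
  have hquot : ((N / D : ℕ) : ℝ) + 1 ≤ 2 * N / D :=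
    calc ((N / D : ℕ) : ℝ) + 1 ≤ N / D + N / D := by
          gcongr
          · exact Nat.cast_div_le
          · exact (one_le_div (mod_cast hD)).mpr (mod_cast hN)
      _ = 2 * N / D := by ring
  calc (#{n ∈ Icc 1 N | ∀ q ∈ T, (q : ℤ) ∣ f.eval ((n : ℕ) : ℤ)} : ℝ)
      ≤ ((N / D : ℕ) + 1) * (∏ q ∈ T, rootCountMod f q : ℕ) := mod_cast hcard
    _ ≤ 2 * N / D * (∏ q ∈ T, rootCountMod f q : ℕ) := by gcongr
    _ = 2 * N * ((∏ q ∈ T, rootCountMod f q : ℕ) / D) := by ring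

theorem sum_prod_filter_dvd_eval_one_add_le (f : ℤ[X]) {P : Finset ℕ} (hpos : ∀ q ∈ P, 0 < q)
    (hP : (P : Set ℕ).Pairwise Nat.Coprime) {N : ℕ} (hN : ∏ q ∈ P, q ≤ N) {g : ℕ → ℝ}
    (hg : ∀ q ∈ P, 0 ≤ g q) :
    ∑ n ∈ Icc 1 N, ∏ q ∈ P with ((q : ℕ) : ℤ) ∣ f.eval (n : ℤ), (1 + g q) ≤
      2 * N * ∏ q ∈ P, (1 + g q * (rootCountMod f q / q)) := by
  have hexpand (n : ℕ) : ∏ q ∈ P with ((q : ℕ) : ℤ) ∣ f.eval (n : ℤ), (1 + g q) =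
      ∑ T ∈ P.powerset, if ∀ q ∈ T, (q : ℤ) ∣ f.eval (n : ℤ) then ∏ q ∈ T, g q else 0 := by
    simp only [← prod_ite_zero, ← prod_one_add, prod_filter, add_ite, add_zero]
  simp only [hexpand]
  rw [sum_comm, prod_one_add, mul_sum]
  refine sum_le_sum fun T hT ↦ ?_
  rw [mem_powerset] at hT
  have hTN : ∏ q ∈ T, q ≤ N :=
    (prod_le_prod_of_subset_of_one_le' hT fun q hq _ ↦ hpos q hq).trans hN
  calc ∑ n ∈ Icc 1 N, (if ∀ q ∈ T, (q : ℤ) ∣ f.eval (n : ℤ) then ∏ q ∈ T, g q else 0)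
      = #{n ∈ Icc 1 N | ∀ q ∈ T, (q : ℤ) ∣ f.eval ((n : ℕ) : ℤ)} * ∏ q ∈ T, g q := by
        rw [← sum_filter, sum_const, nsmul_eq_mul]
    _ ≤ (2 * N * ∏ q ∈ T, (rootCountMod f q / q : ℝ)) * ∏ q ∈ T, g q := by
        gcongr
        · exact prod_nonneg fun q hq ↦ hg q (hT hq)
        · exact card_forall_dvd_eval_le_of_prod_le f (fun q hq ↦ hpos q (hT hq)) (hP.mono hT) hTN
    _ = 2 * N * ∏ q ∈ T, g q * (rootCountMod f q / q) := by
        rw [prod_mul_distrib]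
        ring

lemma one_add_exp_sub_one_mul_le {u v : ℝ} (hu : 0 ≤ u) (hv : 0 ≤ v) (hv1 : v ≤ 1) :
    1 + (exp u - 1) * v ≤ exp ((if 1 ≤ u then u else 0) + 2 * (u * v)) := by
  have hexp : 0 ≤ exp u - 1 := sub_nonneg.mpr (Real.one_le_exp hu)
  split_ifs with h
  · calc 1 + (exp u - 1) * v ≤ 1 + (exp u - 1) := by gcongr; exact mul_le_of_le_one_right hexp hv1
      _ = exp u := by ring
      _ ≤ exp (u + 2 * (u * v)) := Real.exp_le_exp.mpr (le_add_of_nonneg_right (by positivity))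
  · have habs : |exp u - 1| ≤ 2 * |u| :=
      Real.abs_exp_sub_one_le ((abs_of_nonneg hu).trans_le (not_le.mp h).le)
    rw [abs_of_nonneg hexp, abs_of_nonneg hu] at habs
    calc 1 + (exp u - 1) * v ≤ 1 + 2 * u * v := by gcongr
      _ = (0 + 2 * (u * v)) + 1 := by ring
      _ ≤ exp (0 + 2 * (u * v)) := Real.add_one_le_exp _

lemma prod_one_add_exp_sub_one_mul_rootCountMod_le {f : ℤ[X]} {P : Finset ℕ} {d : ℕ}
    (hP : ∀ p ∈ P, p.Prime) (hd : ∀ p ∈ P, rootCountMod f p ≤ d) (s : ℕ) :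
    ∏ p ∈ P, (1 + (exp (s * (p : ℝ)⁻¹) - 1) * (rootCountMod f p / p)) ≤
      exp (s * ∑ p ∈ primesLE s, (p : ℝ)⁻¹ + 2 * d * s) := by
  have hsmall : ∑ p ∈ P, (if 1 ≤ s * (p : ℝ)⁻¹ then s * (p : ℝ)⁻¹ else 0) ≤
      s * ∑ p ∈ primesLE s, (p : ℝ)⁻¹ := by
    rw [← sum_filter, mul_sum]
    refine sum_le_sum_of_subset_of_nonneg (fun p hp ↦ ?_) fun _ _ _ ↦ by positivity
    obtain ⟨hpP, hps⟩ := mem_filter.mp hp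
    rw [← div_eq_mul_inv, one_le_div (mod_cast (hP p hpP).pos)] at hps
    exact mem_primesLE.mpr ⟨mod_cast hps, hP p hpP⟩
  have hlarge : ∑ p ∈ P, 2 * (s * (p : ℝ)⁻¹ * (rootCountMod f p / p)) ≤ 2 * d * s :=
    calc ∑ p ∈ P, 2 * (s * (p : ℝ)⁻¹ * (rootCountMod f p / p))
        ≤ ∑ p ∈ P, 2 * (s * (p : ℝ)⁻¹ * (d / p)) := by
          gcongr with p hp
          exact hd p hp
      _ = 2 * d * s * ∑ p ∈ P, ((p : ℝ) ^ 2)⁻¹ := by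
          rw [mul_sum]
          exact sum_congr rfl fun _ _ ↦ by ring
      _ ≤ 2 * d * s :=
          mul_le_of_le_one_right (by positivity)
            (sum_inv_sq_le_one fun p hp ↦ (hP p hp).two_le)
  calc ∏ p ∈ P, (1 + (exp (s * (p : ℝ)⁻¹) - 1) * (rootCountMod f p / p))
      ≤ ∏ p ∈ P, exp ((if 1 ≤ s * (p : ℝ)⁻¹ then s * (p : ℝ)⁻¹ else 0) +
          2 * (s * (p : ℝ)⁻¹ * (rootCountMod f p / p))) := by
        refine prod_le_prod (fun p _ ↦ ?_) fun p _ ↦ one_add_exp_sub_one_mul_le (by positivity)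
          (by positivity) (div_le_one_of_le₀ (mod_cast rootCountMod_le_self f p) p.cast_nonneg)
        have : 0 ≤ exp (s * (p : ℝ)⁻¹) - 1 := sub_nonneg.mpr (Real.one_le_exp (by positivity))
        positivity
    _ ≤ exp (s * ∑ p ∈ primesLE s, (p : ℝ)⁻¹ + 2 * d * s) := by
        rw [← Real.exp_sum, sum_add_distrib]
        gcongr

theorem sum_exp_mul_sum_filter_dvd_eval_inv_le {f : ℤ[X]} {P : Finset ℕ} {d N : ℕ}
    (hP : ∀ p ∈ P, p.Prime) (hd : ∀ p ∈ P, rootCountMod f p ≤ d) (hN : ∏ p ∈ P, p ≤ N) (s : ℕ) :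
    ∑ n ∈ Icc 1 N, exp (s * ∑ p ∈ P with ((p : ℕ) : ℤ) ∣ f.eval (n : ℤ), (p : ℝ)⁻¹) ≤
      2 * N * exp (s * ∑ p ∈ primesLE s, (p : ℝ)⁻¹ + 2 * d * s) :=
  calc ∑ n ∈ Icc 1 N, exp (s * ∑ p ∈ P with ((p : ℕ) : ℤ) ∣ f.eval (n : ℤ), (p : ℝ)⁻¹)
      = ∑ n ∈ Icc 1 N, ∏ p ∈ P with ((p : ℕ) : ℤ) ∣ f.eval (n : ℤ),
          (1 + (exp (s * (p : ℝ)⁻¹) - 1)) := by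
        simp only [mul_sum, Real.exp_sum, add_sub_cancel]
    _ ≤ 2 * N * ∏ p ∈ P, (1 + (exp (s * (p : ℝ)⁻¹) - 1) * (rootCountMod f p / p)) :=
        sum_prod_filter_dvd_eval_one_add_le f (fun p hp ↦ (hP p hp).pos)
          (fun p hp q hq ↦ (Nat.coprime_primes (hP p hp) (hP q hq)).mpr) hN
          fun p _ ↦ sub_nonneg.mpr (Real.one_le_exp (by positivity))
    _ ≤ 2 * N * exp (s * ∑ p ∈ primesLE s, (p : ℝ)⁻¹ + 2 * d * s) := by
        gcongr
        exact prod_one_add_exp_sub_one_mul_rootCountMod_le hP hd s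

theorem sum_totient_ratio_polynomial_pow_le_general (f : ℤ[X])
    (hf : ∀ n : ℕ, 0 < n → f.eval (n : ℤ) ≠ 0) :
    ∃ C : ℝ, 0 < C ∧ ∀ x : ℝ, 1 ≤ x → ∀ s : ℕ, 0 < s →
      ∑ n ∈ Icc 1 ⌊x⌋₊,
          (((f.eval (n : ℤ)).natAbs : ℝ) / (f.eval (n : ℤ)).natAbs.totient) ^ s ≤
        exp (s * log (log (s + 2)) + C * s) * x := by
  have hf0 : f ≠ 0 := fun h ↦ hf 1 one_pos (by simp [h])
  obtain ⟨d, hd⟩ := exists_rootCountMod_le hf0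
  obtain ⟨C₁, hC₁, hratio⟩ := exists_natAbs_eval_div_totient_le f
  obtain ⟨C₂, hC₂, hMertens⟩ := exists_sum_primesLE_inv_le
  refine ⟨1 + C₁ + C₂ + 2 * d, by positivity, fun x hx s hs ↦ ?_⟩
  set N := ⌊x⌋₊
  have hN : N ≠ 0 := (Nat.floor_pos.mpr hx).ne'
  set P := primesLE (Nat.log 4 N)
  have hPN : ∏ p ∈ P, p ≤ N :=
    (primorial_le_four_pow _).trans (Nat.pow_log_le_self 4 hN)
  have hP : ∀ p ∈ P, p.Prime := fun p ↦ prime_of_mem_primesLE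
  have htwo : 2 ≤ exp s := by
    linarith [Real.add_one_le_exp (s : ℝ), Nat.one_le_cast (α := ℝ).mpr hs]
  calc ∑ n ∈ Icc 1 N, (((f.eval (n : ℤ)).natAbs : ℝ) / (f.eval (n : ℤ)).natAbs.totient) ^ s
      ≤ ∑ n ∈ Icc 1 N, exp (C₁ + ∑ p ∈ P with ((p : ℕ) : ℤ) ∣ f.eval (n : ℤ), (p : ℝ)⁻¹) ^ s := by
        gcongr with n hn
        exact hratio N n hn
    _ = exp (s * C₁) *
          ∑ n ∈ Icc 1 N, exp (s * ∑ p ∈ P with ((p : ℕ) : ℤ) ∣ f.eval (n : ℤ), (p : ℝ)⁻¹) := by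
        rw [mul_sum]
        exact sum_congr rfl fun _ _ ↦ by rw [← Real.exp_nat_mul, mul_add, Real.exp_add]
    _ ≤ exp (s * C₁) * (2 * N * exp (s * ∑ p ∈ primesLE s, (p : ℝ)⁻¹ + 2 * d * s)) := by
        gcongr
        exact sum_exp_mul_sum_filter_dvd_eval_inv_le hP (fun p hp ↦ hd p (hP p hp)) hPN s
    _ ≤ exp (s * C₁) * (exp s * x * exp (s * (log (log (s + 2)) + C₂) + 2 * d * s)) := by
        gcongr
        · exact Nat.floor_le (by positivity)
        · exact hMertens s
    _ = exp (s * log (log (s + 2)) + (1 + C₁ + C₂ + 2 * d) * s) * x := by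
        rw [mul_right_comm, ← mul_assoc, ← Real.exp_add, ← Real.exp_add]
        ring_nf

/-- Theorem (Radomskii, Theorem 3, inequality (1)): for a primitive polynomial `f` with
positive leading coefficient mapping positive integers to positive integers,
`∑_{n ≤ x} (f(n)/φ(f(n)))^s ≤ exp(s log log(s+2) + Cs) x`. -/
theorem sum_totient_ratio_polynomial_pow_le (f : Polynomial ℤ)
    (hlead : 0 < f.leadingCoeff) (hcont : f.content = 1)
    (hpos : ∀ n : ℕ, 0 < n → 0 < f.eval (n : ℤ)) :
    ∃ C : ℝ, 0 < C ∧ ∀ x : ℝ, 1 ≤ x → ∀ s : ℕ, 0 < s →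
      ∑ n ∈ Finset.Icc 1 ⌊x⌋₊,
          (((f.eval (n : ℤ)).toNat : ℝ) / (Nat.totient (f.eval (n : ℤ)).toNat : ℝ)) ^ s ≤
        Real.exp (s * Real.log (Real.log (s + 2)) + C * s) * x := by
  obtain ⟨C, hC, hbound⟩ :=
    sum_totient_ratio_polynomial_pow_le_general f fun n hn ↦ (hpos n hn).ne'
  refine ⟨C, hC, fun x hx s hs ↦ (sum_congr rfl fun n hn ↦ ?_).trans_le (hbound x hx s hs)⟩
  have hnat : (f.eval (n : ℤ)).toNat = (f.eval (n : ℤ)).natAbs := by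
    have := hpos n (mem_Icc.mp hn).1
    lia
  rw [hnat]
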